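/- Let H be a complex Hilbert space, Ω ∈ H, and S a set of continuous linear operators on H such that the orbit {a Ω : a ∈ S} is dense in H. Let Q be a continuous linear operator on H such that for every a ∈ S, either Q(a Ω) = a(Q Ω) or Q(a Ω) = -a(Q Ω). Then all matrix elements of Q vanish, i.e. ⟨Ψ, Q Φ⟩ = 0 for all Ψ, Φ ∈ H, if and only if Q Ω = 0. -/

import Mathlib

open scoped InnerProductSpace

theorem forall_inner_apply_eq_zero_iff {𝕜 M E : Type*} [RCLike 𝕜]
    [AddCommMonoid M] [Module 𝕜 M] [TopologicalSpace M]
    [NormedAddCommGroup E] [InnerProductSpace 𝕜 E] (T : M →L[𝕜] E) :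
    (∀ y x, ⟪y, T x⟫_𝕜 = 0) ↔ T = 0 := by
  constructor
  · intro h
    ext x
    exact inner_self_eq_zero.mp (h (T x) x)
  · rintro rfl y _
    exact inner_zero_right y

theorem eq_zero_iff_apply_eq_zero_of_dense_span_orbit {R M F : Type*} [Semiring R]
    [AddCommGroup M] [Module R M] [TopologicalSpace M] [T2Space M]
    [FunLike F M M] [ZeroHomClass F M M] {v : M} {S : Set F} {T : M →L[R] M}
    (hdense : Dense (Submodule.span R ((fun a : F ↦ a v) '' S) : Set M))
    (hcomm : ∀ a ∈ S, T (a v) = a (T v) ∨ T (a v) = -a (T v)) :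
    T = 0 ↔ T v = 0 := by
  constructor
  · rintro rfl
    rfl
  · intro hv
    have eqOn_orbit : Set.EqOn T (0 : M →L[R] M) ((fun a : F ↦ a v) '' S) := by
      rintro _ ⟨a, ha, rfl⟩
      have apply_image_eq_zero : a (T v) = 0 := by rw [hv, map_zero]
      rcases hcomm a ha with commutes | anticommutes
      · exact commutes.trans apply_image_eq_zero
      · exact anticommutes.trans (neg_eq_zero.mpr apply_image_eq_zero)
    exact ContinuousLinearMap.ext_on hdense eqOn_orbit

theorem matrix_elements_vanish_iff_annihilates_vacuum_general
    {𝕜 H F : Type*} [RCLike 𝕜] [NormedAddCommGroup H] [InnerProductSpace 𝕜 H]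
    [FunLike F H H] [ZeroHomClass F H H] (Ω : H) (S : Set F)
    (hdense : Dense (Submodule.span 𝕜 ((fun a : F ↦ a Ω) '' S) : Set H))
    (Q : H →L[𝕜] H)
    (hcomm : ∀ a ∈ S, Q (a Ω) = a (Q Ω) ∨ Q (a Ω) = -a (Q Ω)) :
    (∀ Ψ Φ : H, ⟪Ψ, Q Φ⟫_𝕜 = 0) ↔ Q Ω = 0 :=
  (forall_inner_apply_eq_zero_iff Q).trans
    (eq_zero_iff_apply_eq_zero_of_dense_span_orbit hdense hcomm)

theorem matrix_elements_vanish_iff_annihilates_vacuum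
    {H : Type*} [NormedAddCommGroup H] [InnerProductSpace ℂ H] [CompleteSpace H]
    (Ω : H) (S : Set (H →L[ℂ] H))
    (hdense : Dense ((fun a : H →L[ℂ] H => a Ω) '' S))
    (Q : H →L[ℂ] H)
    (hcomm : ∀ a ∈ S, Q (a Ω) = a (Q Ω) ∨ Q (a Ω) = -(a (Q Ω))) :
    (∀ Ψ Φ : H, ⟪Ψ, Q Φ⟫_ℂ = 0) ↔ Q Ω = 0 :=
  matrix_elements_vanish_iff_annihilates_vacuum_general Ω S
    (hdense.mono Submodule.subset_span) Q hcomm
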